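/- arXiv:1001.1391 — 2 statements merged into one kernel-verified Lean document; each statement's English description precedes it below -/
import Mathlib

section
/- Let K be a field and R a nonzero associative unital K-algebra, and let (β f) be an extended inner endomorphism of R. Then there exist n ∈ ℕ and vectors a, b : Fin n → R satisfying ∑ i, a i * b i = 1 and, for all j k : Fin n, b j * a k = (if j = k then 1 else 0), such that for every K-algebra S, every K-algebra homomorphism f : R →ₐ[K] S, and every t ∈ S, one has (β f) t = ∑ i, f (a i) * t * f (b i). -/
universe u v

/-!
If `c` commutes with `f(R)` and `t' c = c t`, then `β f t' c = c β f t`. Over `2 × 2` matrices this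
applies to the conjugate elements `t e₁₁` and `t e₁₁ + t e₁₂`, and additivity of `β` gives
`β (t e₁₂) = (β f t) e₁₂` in the upper right corner. Since `β` preserves every subalgebra containing
the image of `R`, upper triangular matrices then show that `β f t` lies in the bimodule
`∑ f(R) t f(R)`, so it is the value at `t` of a tensor in `R ⊗ R`. A tensor is determined by its
action on `End_K R`, that is, on the generic element `id` of the product of copies of `End_K R`
indexed by `End_K R`. Comparing `S` with this product makes the tensor independent of `S`, `f` and
`t`. Write it as `∑ aᵢ ⊗ bᵢ` with independent `aᵢ` and independent `bᵢ`; multiplicativity of `β` on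
rank-one operators of `R` forces `bⱼ aₖ = δⱼₖ`.
-/

universe w

open scoped TensorProduct

theorem tensor_ext_lTensor_dual {K V W : Type*} [CommSemiring K] [AddCommMonoid V] [Module K V]
    [AddCommMonoid W] [Module K W] [Module.Free K W] {z z' : V ⊗[K] W}
    (h : ∀ φ : Module.Dual K W,
      TensorProduct.rid K V (φ.lTensor V z) = TensorProduct.rid K V (φ.lTensor V z')) :
    z = z' := by
  let e := Module.Free.chooseBasis K W
  have coord_eq (i) : Finsupp.lapply i ∘ₗ (TensorProduct.equivFinsuppOfBasisRight e).toLinearMap =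
      (TensorProduct.rid K V).toLinearMap ∘ₗ (e.coord i).lTensor V := by
    ext x y
    simp
  refine (TensorProduct.equivFinsuppOfBasisRight e).injective (Finsupp.ext fun i ↦ ?_)
  exact (LinearMap.congr_fun (coord_eq i) z).trans <|
    (h (e.coord i)).trans (LinearMap.congr_fun (coord_eq i) z').symm

section LinearAlgebra

variable {K V W : Type*} [Field K] [AddCommGroup V] [Module K V] [AddCommGroup W] [Module K W]

theorem exists_lt_sum_tmul_eq_of_not_linearIndependent {n : ℕ} (a : Fin n → V) (b : Fin n → W)
    (ha : ¬ LinearIndependent K a) :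
    ∃ m < n, ∃ (a' : Fin m → V) (b' : Fin m → W),
      ∑ i, a i ⊗ₜ[K] b i = ∑ i, a' i ⊗ₜ[K] b' i := by
  obtain ⟨g, hg, k, hk⟩ := Fintype.not_linearIndependent_iff.1 ha
  obtain _ | n := n
  · exact k.elim0
  refine ⟨n, n.lt_succ_self, fun i ↦ a (k.succAbove i),
    fun i ↦ b (k.succAbove i) - ((g k)⁻¹ * g (k.succAbove i)) • b k, ?_⟩
  have correction_eq_zero : ∑ i, a i ⊗ₜ[K] (((g k)⁻¹ * g i) • b k) = 0 := by
    simp_rw [mul_smul, TensorProduct.tmul_smul, ← Finset.smul_sum, TensorProduct.smul_tmul',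
      ← TensorProduct.sum_tmul, hg, TensorProduct.zero_tmul, smul_zero]
  calc ∑ i, a i ⊗ₜ[K] b i = ∑ i, a i ⊗ₜ[K] (b i - ((g k)⁻¹ * g i) • b k) := by
        simp_rw [TensorProduct.tmul_sub, Finset.sum_sub_distrib, correction_eq_zero, sub_zero]
    _ = _ := by simp [Fin.sum_univ_succAbove _ k, hk]

theorem exists_eq_sum_tmul_linearIndependent (z : V ⊗[K] W) :
    ∃ (n : ℕ) (a : Fin n → V) (b : Fin n → W),
      z = ∑ i, a i ⊗ₜ[K] b i ∧ LinearIndependent K a ∧ LinearIndependent K b := by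
  classical
  have hz := TensorProduct.exists_sum_tmul_eq z
  obtain ⟨a, b, hab⟩ := Nat.find_spec hz
  refine ⟨Nat.find hz, a, b, hab, ?_, ?_⟩
  · by_contra ha
    obtain ⟨m, hm, a', b', h⟩ := exists_lt_sum_tmul_eq_of_not_linearIndependent a b ha
    exact Nat.find_min hz hm ⟨a', b', hab.trans h⟩
  · by_contra hb
    obtain ⟨m, hm, b', a', h⟩ := exists_lt_sum_tmul_eq_of_not_linearIndependent b a hb
    refine Nat.find_min hz hm ⟨a', b', hab.trans ?_⟩
    simpa using congrArg (TensorProduct.comm K W V) h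

theorem exists_dual_apply_eq_ite {ι : Type*} [DecidableEq ι] {b : ι → V}
    (hb : LinearIndependent K b) (k : ι) :
    ∃ φ : Module.Dual K V, ∀ i, φ (b i) = if i = k then 1 else 0 := by
  obtain ⟨g, hg⟩ := LinearMap.exists_leftInverse_of_injective (Finsupp.linearCombination K b)
    (LinearMap.ker_eq_bot.2 hb)
  refine ⟨Finsupp.lapply k ∘ₗ g, fun i ↦ ?_⟩
  have hgi : g (b i) = Finsupp.single i 1 := by
    simpa using LinearMap.congr_fun hg (Finsupp.single i 1)
  simp [hgi, Finsupp.single_apply]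

end LinearAlgebra

section Sandwich

variable {K R S T : Type*} [CommSemiring K] [Semiring R] [Algebra K R] [Semiring S] [Algebra K S]
  [Semiring T] [Algebra K T]

/-- The map `a ⊗ b ↦ f a * t * f b`: evaluation of a tensor over `R`, viewed as a homogeneous linear
noncommutative polynomial in one variable with coefficients in `R`, at the element `t`. -/
noncomputable def sandwich (f : R →ₐ[K] S) (t : S) : R ⊗[K] R →ₗ[K] S :=
  LinearMap.mul' K S ∘ₗ
    TensorProduct.map (LinearMap.mulRight K t ∘ₗ f.toLinearMap) f.toLinearMap

@[simp]
theorem sandwich_tmul (f : R →ₐ[K] S) (t : S) (a b : R) :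
    sandwich f t (a ⊗ₜ b) = f a * t * f b := by
  simp [sandwich]

theorem map_sandwich (h : S →ₐ[K] T) (f : R →ₐ[K] S) (t : S) (z : R ⊗[K] R) :
    h (sandwich f t z) = sandwich (h.comp f) (h t) z := by
  induction z with
  | zero => simp
  | tmul a b => simp
  | add x y hx hy => simp [hx, hy]

theorem mul_sandwich_mem_range (f : R →ₐ[K] S) (t : S) (r : R) {x : S}
    (hx : x ∈ LinearMap.range (sandwich f t)) : f r * x ∈ LinearMap.range (sandwich f t) := by
  obtain ⟨z, rfl⟩ := hx
  refine ⟨(LinearMap.mulLeft K r).rTensor R z, ?_⟩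
  induction z with
  | zero => simp
  | tmul a b => simp [mul_assoc]
  | add x y hx hy => simp [hx, hy, mul_add]

theorem sandwich_mul_mem_range (f : R →ₐ[K] S) (t : S) (r : R) {x : S}
    (hx : x ∈ LinearMap.range (sandwich f t)) : x * f r ∈ LinearMap.range (sandwich f t) := by
  obtain ⟨z, rfl⟩ := hx
  refine ⟨(LinearMap.mulRight K r).lTensor R z, ?_⟩
  induction z with
  | zero => simp
  | tmul a b => simp [mul_assoc]
  | add x y hx hy => simp [hx, hy, add_mul]

theorem self_mem_range_sandwich (f : R →ₐ[K] S) (t : S) : t ∈ LinearMap.range (sandwich f t) :=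
  ⟨1 ⊗ₜ 1, by simp⟩

theorem sandwich_lmul_smulRight_one (φ : Module.Dual K R) (z : R ⊗[K] R) :
    sandwich (Algebra.lmul K R) (φ.smulRight 1) z 1 = TensorProduct.rid K R (φ.lTensor R z) := by
  induction z with
  | zero => simp
  | tmul a b => simp
  | add x y hx hy => simp [hx, hy]

end Sandwich

theorem eq_of_forall_sandwich_lmul_eq {K R : Type*} [CommSemiring K] [Semiring R] [Algebra K R]
    [Module.Free K R] {z z' : R ⊗[K] R}
    (h : ∀ s : Module.End K R,
      sandwich (Algebra.lmul K R) s z = sandwich (Algebra.lmul K R) s z') : z = z' :=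
  tensor_ext_lTensor_dual fun φ ↦ by simp only [← sandwich_lmul_smulRight_one, h]

theorem mul_eq_ite_of_sandwich_lmul_mul {K R ι : Type*} [Field K] [Ring R] [Algebra K R]
    [Fintype ι] [DecidableEq ι] {a b : ι → R}
    (ha : LinearIndependent K a) (hb : LinearIndependent K b)
    (hmul : ∀ s t : Module.End K R,
      sandwich (Algebra.lmul K R) (s * t) (∑ i, a i ⊗ₜ b i) =
        sandwich (Algebra.lmul K R) s (∑ i, a i ⊗ₜ b i) *
          sandwich (Algebra.lmul K R) t (∑ i, a i ⊗ₜ b i)) (j k : ι) :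
    b j * a k = if j = k then 1 else 0 := by
  obtain ⟨ψ, hψ⟩ := exists_dual_apply_eq_ite hb k
  refine sub_eq_zero.1 ((Module.forall_dual_apply_eq_zero_iff K _).1 fun φ ↦ ?_)
  have rank_one_mul : φ 1 • a k = ∑ i, φ (b i * a k) • a i := by
    simpa [hψ, apply_ite φ, ite_smul] using
      LinearMap.congr_fun (hmul (φ.smulRight 1) (ψ.smulRight 1)) 1
  have relation : ∑ i, φ (b i * a k - if i = k then 1 else 0) • a i = 0 := by
    simp [sub_smul, ← rank_one_mul, apply_ite φ, ite_smul]
  exact Fintype.linearIndependent_iff.1 ha _ relation j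

section UpperTriangular

variable {K R S : Type*} [CommSemiring K] [Semiring R] [Algebra K R] [Semiring S] [Algebra K S]

/-- The algebra of upper triangular `2 × 2` matrices with diagonal entries in the image of `f` and
upper right entry in `N`, for a submodule `N` stable under multiplication by this image. -/
def upperTriangular (f : R →ₐ[K] S) (N : Submodule K S)
    (hl : ∀ r, ∀ x ∈ N, f r * x ∈ N) (hr : ∀ r, ∀ x ∈ N, x * f r ∈ N) :
    Subalgebra K (Matrix (Fin 2) (Fin 2) S) where
  carrier := {m | m 0 0 ∈ f.range ∧ m 0 1 ∈ N ∧ m 1 0 = 0 ∧ m 1 1 ∈ f.range}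
  mul_mem' := by
    rintro m m' ⟨⟨p, hp⟩, h01, h10, h11⟩ ⟨h00', h01', h10', ⟨q, hq⟩⟩
    simp only [Set.mem_ofPred_eq, Matrix.mul_apply, Fin.sum_univ_two, h10, h10', mul_zero,
      zero_mul, add_zero, zero_add, true_and, ← hp, ← hq]
    exact ⟨mul_mem ⟨p, rfl⟩ h00', N.add_mem (hl p _ h01') (hr q _ h01), mul_mem h11 ⟨q, rfl⟩⟩
  add_mem' := fun ⟨h00, h01, h10, h11⟩ ⟨h00', h01', h10', h11'⟩ ↦
    ⟨add_mem h00 h00', add_mem h01 h01', by simp [h10, h10'], add_mem h11 h11'⟩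
  algebraMap_mem' c := by
    simp [Matrix.algebraMap_matrix_apply, algebraMap_mem f.range c, -AlgHom.mem_range]

end UpperTriangular

/-- An extended inner endomorphism of `R`: a family of endomorphisms, natural in the homomorphisms
`f : R → S`, of the `K`-algebras `S` under `R` in a fixed universe `w`. The member of the family `β`
at `f` is `β.along f`. -/
structure ExtendedInnerEndomorphism (K : Type v) (R : Type u) [CommRing K] [Ring R]
    [Algebra K R] where
  along {S : Type w} [Ring S] [Algebra K S] (f : R →ₐ[K] S) : S →ₐ[K] S
  naturality {S T : Type w} [Ring S] [Algebra K S] [Ring T] [Algebra K T]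
    (f : R →ₐ[K] S) (h : S →ₐ[K] T) : (along (h.comp f)).comp h = h.comp (along f)

namespace ExtendedInnerEndomorphism

section

variable {K : Type v} {R : Type u} [CommRing K] [Ring R] [Algebra K R]
  (β : ExtendedInnerEndomorphism.{u, v, w} K R)
  {S T : Type w} [Ring S] [Algebra K S] [Ring T] [Algebra K T] (f : R →ₐ[K] S)

theorem along_comp_apply (h : S →ₐ[K] T) (t : S) :
    β.along (h.comp f) (h t) = h (β.along f t) :=
  DFunLike.congr_fun (β.naturality f h) t

theorem along_mem {A : Subalgebra K S} (hf : ∀ r, f r ∈ A) {t : S} (ht : t ∈ A) :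
    β.along f t ∈ A := by
  have h := β.along_comp_apply (f.codRestrict A hf) A.val ⟨t, ht⟩
  rw [AlgHom.val_comp_codRestrict] at h
  exact h ▸ SetLike.coe_mem _

theorem along_scalar_diagonal {n : ℕ} (t : Fin n → S) :
    β.along ((Matrix.scalarAlgHom (Fin n) K).comp f) (Matrix.diagonal t) =
      Matrix.diagonal fun i ↦ β.along f (t i) := by
  let g : R →ₐ[K] Fin n → S := AlgHom.pi fun _ ↦ f
  have along_g : β.along g t = fun i ↦ β.along f (t i) :=
    funext fun i ↦ (β.along_comp_apply g (Pi.evalAlgHom K (fun _ ↦ S) i) t).symm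
  exact along_g ▸ β.along_comp_apply g (Matrix.diagonalAlgHom K) t

theorem along_mul_eq_mul_along {c t t' : S} (hf : ∀ r, Commute c (f r)) (hc : t' * c = c * t) :
    β.along f t' * c = c * β.along f t := by
  -- `diag(t', t)` commutes with `c e₁₂` exactly when `t' c = c t`.
  let C : Matrix (Fin 2) (Fin 2) S := !![0, c; 0, 0]
  have diagonal_mem {s s' : S} (h : c * s = s' * c) :
      Matrix.diagonal ![s', s] ∈ Subalgebra.centralizer K {C} := by
    rw [Subalgebra.mem_centralizer_iff]
    rintro _ rfl
    ext i j
    fin_cases i <;> fin_cases j <;> simp [C, h]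
  have scalar_mem (r : R) :
      (Matrix.scalarAlgHom (Fin 2) K).comp f r ∈ Subalgebra.centralizer K {C} := by
    convert diagonal_mem (hf r) using 1
    ext i j
    fin_cases i <;> fin_cases j <;> simp
  have h := β.along_mem _ scalar_mem (diagonal_mem hc.symm)
  rw [along_scalar_diagonal, Subalgebra.mem_centralizer_iff] at h
  simpa [C] using (congrFun₂ (h C rfl) 0 1).symm

theorem along_scalar_matrixUnit (t : S) :
    β.along ((Matrix.scalarAlgHom (Fin 2) K).comp f) !![0, t; 0, 0] 0 1 = β.along f t := by
  let g := (Matrix.scalarAlgHom (Fin 2) K).comp f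
  let U : Matrix (Fin 2) (Fin 2) S := !![1, 1; 0, 1]
  have U_comm (r : R) : Commute U (g r) := by
    ext i j
    fin_cases i <;> fin_cases j <;> simp [U, g, Matrix.mul_apply]
  have conj : Matrix.diagonal ![t, 0] * U = U * (Matrix.diagonal ![t, 0] + !![0, t; 0, 0]) := by
    ext i j
    fin_cases i <;> fin_cases j <;> simp [U, Matrix.mul_apply]
  have h := β.along_mul_eq_mul_along g U_comm conj
  rw [map_add, along_scalar_diagonal] at h
  have h11 : β.along g !![0, t; 0, 0] 1 1 = 0 := by
    simpa [U, Matrix.mul_apply] using (congrFun₂ h 1 1).symm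
  simpa [U, Matrix.mul_apply, h11] using (congrFun₂ h 0 1).symm

theorem along_mem_of_bimodule {N : Submodule K S} (hl : ∀ r, ∀ x ∈ N, f r * x ∈ N)
    (hr : ∀ r, ∀ x ∈ N, x * f r ∈ N) {t : S} (ht : t ∈ N) : β.along f t ∈ N := by
  rw [← along_scalar_matrixUnit]
  refine (β.along_mem (A := upperTriangular f N hl hr) _ (fun r ↦ ?_) ?_).2.1
  · exact ⟨⟨r, by simp⟩, by simp, by simp, ⟨r, by simp⟩⟩
  · exact ⟨⟨0, by simp⟩, by simpa, by simp, ⟨0, by simp⟩⟩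

theorem exists_along_eq_sandwich (t : S) : ∃ z, β.along f t = sandwich f t z := by
  have h : β.along f t ∈ LinearMap.range (sandwich f t) :=
    β.along_mem_of_bimodule f (fun r _ ↦ mul_sandwich_mem_range f t r)
      (fun r _ ↦ sandwich_mul_mem_range f t r) (self_mem_range_sandwich f t)
  exact h.imp fun _ ↦ Eq.symm

end

theorem exists_forall_along_eq_sandwich {K : Type v} {R : Type u} [CommRing K] [Ring R]
    [Algebra K R] [Module.Free K R] (β : ExtendedInnerEndomorphism.{u, v, u} K R) :
    ∃ z : R ⊗[K] R, ∀ {S : Type u} [Ring S] [Algebra K S] (f : R →ₐ[K] S) (t : S),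
      β.along f t = sandwich f t z := by
  let E := Module.End K R
  let f₀ : R →ₐ[K] E → E := AlgHom.pi fun _ ↦ Algebra.lmul K R
  obtain ⟨z, hz⟩ := β.exists_along_eq_sandwich f₀ id
  refine ⟨z, fun {S} _ _ f t ↦ ?_⟩
  obtain ⟨z', hz'⟩ := β.exists_along_eq_sandwich (f₀.prod f) (id, t)
  have transfer {T : Type u} [Ring T] [Algebra K T] (h : (E → E) × S →ₐ[K] T) :
      β.along (h.comp (f₀.prod f)) (h (id, t)) =
        sandwich (h.comp (f₀.prod f)) (h (id, t)) z' := by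
    rw [along_comp_apply, hz', map_sandwich]
  have hz₀ : sandwich f₀ id z = sandwich f₀ id z' := hz ▸ transfer (AlgHom.fst K _ _)
  have z_eq : z = z' := eq_of_forall_sandwich_lmul_eq fun s ↦ by
    have hs := congrArg (Pi.evalAlgHom K (fun _ ↦ E) s) hz₀
    rwa [map_sandwich, map_sandwich] at hs
  exact z_eq ▸ transfer (AlgHom.snd K _ _)

end ExtendedInnerEndomorphism

theorem extended_inner_endomorphism_of_algebra
    (K : Type v) [Field K] (R : Type u) [Ring R] [Algebra K R] [Nontrivial R]
    (β : ∀ (S : Type u) [Ring S] [Algebra K S], (R →ₐ[K] S) → (S →ₐ[K] S))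
    (hnat : ∀ (S₁ S₂ : Type u) [Ring S₁] [Algebra K S₁] [Ring S₂] [Algebra K S₂]
      (f₁ : R →ₐ[K] S₁) (f₂ : R →ₐ[K] S₂) (h : S₁ →ₐ[K] S₂),
      h.comp f₁ = f₂ → (β S₂ f₂).comp h = h.comp (β S₁ f₁)) :
    ∃ (n : ℕ) (a b : Fin n → R),
      (∑ i, a i * b i = 1) ∧
      (∀ j k : Fin n, b j * a k = if j = k then 1 else 0) ∧
      (∀ (S : Type u) [Ring S] [Algebra K S] (f : R →ₐ[K] S) (t : S),
        β S f t = ∑ i, f (a i) * t * f (b i)) := by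
  let B : ExtendedInnerEndomorphism K R := ⟨β _, fun f h ↦ hnat _ _ f _ h rfl⟩
  obtain ⟨z, hz⟩ := B.exists_forall_along_eq_sandwich
  obtain ⟨n, a, b, rfl, ha, hb⟩ := exists_eq_sum_tmul_linearIndependent z
  refine ⟨n, a, b, ?_, ?_, fun S _ _ f t ↦ ?_⟩
  · simpa using (hz (AlgHom.id K R) 1).symm
  · exact mul_eq_ite_of_sandwich_lmul_mul ha hb fun s t ↦ by simp only [← hz, map_mul]
  · simpa using hz f t
end

section
/- Let A be an additive abelian group in universe u. Suppose given, for every additive abelian group B in universe u and every additive group homomorphism f : A →+ B, an additive group homomorphism β f : B →+ B, such that for all homomorphisms f₁ : A →+ B₁, f₂ : A →+ B₂ and h : B₁ →+ B₂ with h.comp f₁ = f₂, one has (β f₂).comp h = h.comp (β f₁). Then there exists an integer n ∈ ℤ such that for every f : A →+ B and every b ∈ B, (β f) b = n • b. -/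
universe u

/-!
Let `A[x] = A × R` be the module `A` with a free element `x = (0, 1)` adjoined. A pair of a linear
map `f : A → B` and an element `b : B` is the same as a map `A[x] → B` under `A` sending `x` to
`b`, so naturality determines `β f b` by the single element `β x = (a, r)` of `A[x]`, namely
`β f b = f a + r • b`. If `β f` fixes `0`, then taking `b = 0` shows that `f a = 0`.
-/

universe v

section AdjoinFree

variable (R : Type v) [Small.{u} R] (A : Type u)

/-- The module `A[x]` obtained from `A` by adjoining a free element. The factor `R` is shrunk so
that `A[x]` lies in the universe of `A`. -/
abbrev AdjoinFree : Type u := A × Shrink.{u} R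

namespace AdjoinFree

variable [Semiring R] [AddCommMonoid A]

/-- The adjoined free element `x` of `A[x]`. -/
noncomputable def gen : AdjoinFree R A := (0, (Shrink.linearEquiv R R).symm 1)

variable {R A} [Module R A] {B : Type*} [AddCommMonoid B] [Module R B]

/-- The map `A[x] → B` which is `f` on `A` and sends `x` to `b`: the universal property of
`A[x]`. -/
noncomputable def lift (f : A →ₗ[R] B) (b : B) : AdjoinFree R A →ₗ[R] B :=
  f.coprod (LinearMap.toSpanSingleton R B b ∘ₗ (Shrink.linearEquiv R R).toLinearMap)

theorem lift_apply (f : A →ₗ[R] B) (b : B) (p : AdjoinFree R A) :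
    lift f b p = f p.1 + Shrink.linearEquiv R R p.2 • b :=
  rfl

@[simp]
theorem lift_gen (f : A →ₗ[R] B) (b : B) : lift f b (gen R A) = b := by
  simp [lift_apply, gen]

@[simp]
theorem lift_comp_inl (f : A →ₗ[R] B) (b : B) :
    lift f b ∘ₗ LinearMap.inl R A (Shrink.{u} R) = f :=
  LinearMap.coprod_inl _ _

end AdjoinFree

end AdjoinFree

section IsNaturalUnder

variable {R : Type v} [Ring R] {A : Type u} [AddCommGroup A] [Module R A]

/-- A family of self-maps `β f : B → B`, indexed by the `R`-linear maps `f : A → B` out of `A`, is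
natural under `A` if it commutes with all maps of modules under `A`. The members of the family are
bare functions, and a commuting triangle under `A` is encoded as a composable pair. -/
def IsNaturalUnder
    (β : ∀ (B : Type u) [AddCommGroup B] [Module R B], (A →ₗ[R] B) → B → B) : Prop :=
  ∀ (B C : Type u) [AddCommGroup B] [Module R B] [AddCommGroup C] [Module R C]
    (f : A →ₗ[R] B) (h : B →ₗ[R] C) (b : B), β C (h ∘ₗ f) (h b) = h (β B f b)

namespace IsNaturalUnder

variable [Small.{u} R]
  {β : ∀ (B : Type u) [AddCommGroup B] [Module R B], (A →ₗ[R] B) → B → B}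

theorem apply_eq_lift (hβ : IsNaturalUnder β) {B : Type u} [AddCommGroup B] [Module R B]
    (f : A →ₗ[R] B) (b : B) :
    β B f b = AdjoinFree.lift f b
      (β (AdjoinFree R A) (LinearMap.inl R A (Shrink.{u} R)) (AdjoinFree.gen R A)) := by
  simpa using hβ _ _ (LinearMap.inl R A (Shrink.{u} R)) (AdjoinFree.lift f b) (AdjoinFree.gen R A)

theorem exists_eq_map_add_smul (hβ : IsNaturalUnder β) :
    ∃ (a : A) (r : R), ∀ (B : Type u) [AddCommGroup B] [Module R B] (f : A →ₗ[R] B) (b : B),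
      β B f b = f a + r • b :=
  ⟨_, _, fun _ _ _ f b ↦ (hβ.apply_eq_lift f b).trans (AdjoinFree.lift_apply f b _)⟩

end IsNaturalUnder

theorem extended_inner_endomorphism_of_AddCommGroup_general
    [Small.{u} R] {β : ∀ (B : Type u) [AddCommGroup B] [Module R B], (A →ₗ[R] B) → B → B}
    (hβ : IsNaturalUnder β)
    (hβ_zero : ∀ (B : Type u) [AddCommGroup B] [Module R B] (f : A →ₗ[R] B), β B f 0 = 0) :
    ∃ r : R, ∀ (B : Type u) [AddCommGroup B] [Module R B] (f : A →ₗ[R] B) (b : B),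
      β B f b = r • b := by
  obtain ⟨a, r, h⟩ := hβ.exists_eq_map_add_smul
  refine ⟨r, fun B _ _ f b ↦ ?_⟩
  have map_a : f a = 0 := by simpa [hβ_zero] using (h B f 0).symm
  rw [h, map_a, zero_add]

end IsNaturalUnder

theorem extended_inner_endomorphism_of_AddCommGroup
    (A : Type u) [AddCommGroup A]
    (β : ∀ (B : Type u) [AddCommGroup B], (A →+ B) → (B →+ B))
    (hnat : ∀ (B₁ B₂ : Type u) [AddCommGroup B₁] [AddCommGroup B₂]
      (f₁ : A →+ B₁) (f₂ : A →+ B₂) (h : B₁ →+ B₂),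
      h.comp f₁ = f₂ → (β B₂ f₂).comp h = h.comp (β B₁ f₁)) :
    ∃ n : ℤ, ∀ (B : Type u) [AddCommGroup B] (f : A →+ B) (b : B),
      β B f b = n • b := by
  have ⟨n, hn⟩ := extended_inner_endomorphism_of_AddCommGroup_general (R := ℤ)
    (β := fun B _ _ f ↦ β B f.toAddMonoidHom)
    (fun B C _ _ _ _ f h ↦ DFunLike.congr_fun (hnat B C f _ h.toAddMonoidHom rfl))
    (fun B _ _ f ↦ map_zero (β B f.toAddMonoidHom))
  exact ⟨n, fun B _ f ↦ hn B f.toIntLinearMap⟩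
end
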